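/- For every real number s ≥ 0 and every τ in the open interval (1/2, 1) satisfying τ > (Q(s+1) − 1)/Q(s+2), one has Π(τ, λ(s)) ≤ 1 + 10·2^(τ·ξ) + 5·Σ_{j=0}^{⌊s⌋+1} 2^((1−τ)·Q(j+1) − τ·(Ξ−2ξ)·(j+1)). -/

import Mathlib

open scoped Classical ENNReal
open Real Set Filter

/-- The quadratic function `Q(s) = q·s²`. -/
noncomputable def Qf (q : ℤ) (s : ℝ) : ℝ := (q : ℝ) * s ^ 2

/-- The half-open interval `I_s = [2^(Q(s)), 2^(Q(s)) + Q(s+1) − Q(s) + Ξ)`. -/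
noncomputable def Iset (q Ξ : ℤ) (s : ℝ) : Set ℝ :=
  Set.Ico ((2 : ℝ) ^ (Qf q s)) ((2 : ℝ) ^ (Qf q s) + Qf q (s + 1) - Qf q s + (Ξ : ℝ))

/-- The half-open interval `J_s = [2^(Q(s)) + Q(s+1) − Q(s) + Ξ, 2^(Q(s+1)))`. -/
noncomputable def Jset (q Ξ : ℤ) (s : ℝ) : Set ℝ :=
  Set.Ico ((2 : ℝ) ^ (Qf q s) + Qf q (s + 1) - Qf q s + (Ξ : ℝ)) ((2 : ℝ) ^ (Qf q (s + 1)))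

/-- The sequence `(x_j)` in `{0,1}`: `x_j = 0` iff `j + 1 ∈ I_s` for some integer `s ≥ 0`. -/
noncomputable def xseq (q Ξ : ℤ) (j : ℕ) : ℕ :=
  if ∃ s : ℕ, ((j : ℝ) + 1) ∈ Iset q Ξ (s : ℝ) then 0 else 1

/-- `N(k) = #{ j ∈ {0,…,k−1} : x_j = 0 }`, with `N(0) = 0`. -/
noncomputable def Nf (q Ξ : ℤ) (k : ℕ) : ℕ :=
  ((Finset.range k).filter (fun j => xseq q Ξ j = 0)).card

/-- `B(0) = 0`, `B(1) = 1`, and for `k ≥ 2`,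
`B(k) = 1 + #{ j ∈ {0,…,k−2} : x_j ≠ x_{j+1} }`. -/
noncomputable def Bf (q Ξ : ℤ) (k : ℕ) : ℕ :=
  if k = 0 then 0
  else 1 + ((Finset.range (k - 1)).filter (fun j => xseq q Ξ j ≠ xseq q Ξ (j + 1))).card

/-- The length `|J_s| = 2^(Q(s+1)) − 2^(Q(s)) − (Q(s+1) − Q(s) + Ξ)` of `J_s`. -/
noncomputable def Jlen (q Ξ : ℤ) (s : ℝ) : ℝ :=
  (2 : ℝ) ^ (Qf q (s + 1)) - (2 : ℝ) ^ (Qf q s) - (Qf q (s + 1) - Qf q s + (Ξ : ℝ))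

/-- `λ(s) = 1/|J_s|`. -/
noncomputable def lamf (q Ξ : ℤ) (s : ℝ) : ℝ := 1 / Jlen q Ξ s

/-- The two-variable series `Π(τ,λ) = Σ_{k≥0} 2^(−λk − τ·N(k) + τ·ξ·B(k))`, a sum in `[0,∞]`. -/
noncomputable def Pi2 (q Ξ : ℤ) (ξ τ lam : ℝ) : ℝ≥0∞ :=
  ∑' k : ℕ, ENNReal.ofReal
    ((2 : ℝ) ^ (-lam * (k : ℝ) - τ * (Nf q Ξ k : ℝ) + τ * ξ * (Bf q Ξ k : ℝ)))

/-!
Away from `k = 0`, split the series into the blocks `2 ^ Q(n) ≤ k < 2 ^ Q(n + 1)`, that is, into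
`I_n` followed by `J_n`. On `I_n` the count `N` grows by one at each step from `q n² + Ξ n + 1`
while `B = 2 n + 1`, so the terms decay geometrically in both `k` and `n`, and the `I_n` together
contribute at most a multiple of `2 ^ (τ ξ)`. On `J_n` both `N = q (n + 1)² + Ξ (n + 1)` and
`B = 2 n + 2` are constant, so bounding `2 ^ (-λ k)` by `1` and counting terms yields the `n`-th
summand `a_n` of the right-hand side. Once `2 ^ Q(M + 1)` exceeds `1 / λ`, it is better to bound
`∑ 2 ^ (-λ k)` over `J_n` by `2 / λ ≤ 2 * 2 ^ Q(M + 1)`: the blocks `n > M` then contribute at most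
`2 * 4 ^ (-τ (n - M)) * a_M`, whose sum is a constant multiple of `a_M`.
-/

section Intervals

variable {q Ξ : ℤ}

lemma Qf_le_Qf (hq : 0 ≤ q) {a b : ℝ} (ha : 0 ≤ a) (hab : a ≤ b) : Qf q a ≤ Qf q b := by
  have : (0 : ℝ) ≤ q := mod_cast hq
  unfold Qf
  gcongr

lemma Qf_add_one (q : ℤ) (s : ℝ) : Qf q (s + 1) = Qf q s + q * (2 * s + 1) := by
  unfold Qf
  ring

lemma Jlen_zero (q Ξ : ℤ) : Jlen q Ξ 0 = 2 ^ (q : ℝ) - 1 - (q + Ξ) := by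
  simp [Jlen, Qf]

lemma Jlen_zero_le_Jlen (Ξ : ℤ) (hq : 1 ≤ q) {s : ℝ} (hs : 0 ≤ s) :
    Jlen q Ξ 0 ≤ Jlen q Ξ s := by
  have hq' : (1 : ℝ) ≤ q := mod_cast hq
  have hqs : 0 ≤ q * s := by positivity
  have hlin : 1 + q * s ≤ (2 : ℝ) ^ (2 * (q * s)) := by
    rw [Real.rpow_def_of_pos two_pos]
    have hexp := Real.add_one_le_exp (Real.log 2 * (2 * (q * s)))
    nlinarith [Real.log_two_gt_d9]
  have hbase : (2 : ℝ) ≤ 2 ^ (q : ℝ) := Real.self_le_rpow_of_one_le one_le_two hq'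
  have hone : (1 : ℝ) ≤ 2 ^ Qf q s := Real.one_le_rpow one_le_two (by unfold Qf; positivity)
  have hratio : 2 ^ (q : ℝ) + 2 * (q * s) ≤ (2 : ℝ) ^ (2 * (q * s)) * 2 ^ (q : ℝ) := by
    nlinarith [mul_nonneg hqs (sub_nonneg.2 hbase)]
  have hnext : (2 : ℝ) ^ Qf q (s + 1) = 2 ^ Qf q s * (2 ^ (2 * (q * s)) * 2 ^ (q : ℝ)) := by
    rw [← Real.rpow_add two_pos, ← Real.rpow_add two_pos, Qf_add_one]
    ring_nf
  rw [Jlen_zero, Jlen, hnext, Qf_add_one]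
  nlinarith [mul_nonneg (sub_nonneg.2 hone) (sub_nonneg.2 hratio)]

lemma Jlen_le_two_rpow (hq : 0 ≤ q) (hqΞ : 0 ≤ q + Ξ) {s : ℝ} (hs : 0 ≤ s) :
    Jlen q Ξ s ≤ 2 ^ Qf q (s + 1) := by
  have : (0 : ℝ) ≤ q := mod_cast hq
  have hqΞ' : (0 : ℝ) ≤ q + Ξ := mod_cast hqΞ
  have hpos : (0 : ℝ) ≤ 2 ^ Qf q s := by positivity
  have hqs : 0 ≤ q * s := by positivity
  unfold Jlen
  linarith [Qf_add_one q s]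

lemma one_le_Jlen_zero (hqΞ : 0 ≤ q + Ξ)
    (hpow : (q : ℝ) + 1 + Ξ ≤ 2 ^ ((q : ℝ) - 1)) : 1 ≤ Jlen q Ξ 0 := by
  have hqΞ' : (0 : ℝ) ≤ q + Ξ := mod_cast hqΞ
  rw [Real.rpow_sub_one two_ne_zero] at hpow
  rw [Jlen_zero]
  linarith

/-- The left endpoint `2 ^ Q(n)` of the interval `I_n`, as a natural number. -/
def Istart (q : ℤ) (n : ℕ) : ℕ := 2 ^ (q.toNat * n ^ 2)

/-- The length `Q(n + 1) - Q(n) + Ξ = q (2n + 1) + Ξ` of the interval `I_n`, as a natural number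
(truncated to `0` if negative). -/
def Ilen (q Ξ : ℤ) (n : ℕ) : ℕ := (q * (2 * n + 1) + Ξ).toNat

lemma Istart_pos (q : ℤ) (n : ℕ) : 0 < Istart q n := Nat.two_pow_pos _

lemma cast_Istart (hq : 0 ≤ q) (n : ℕ) : (Istart q n : ℝ) = 2 ^ Qf q n := by
  have hcast : (q.toNat : ℝ) = q := mod_cast Int.toNat_of_nonneg hq
  rw [Istart, Qf, ← hcast]
  norm_cast

lemma cast_Ilen (hq : 0 ≤ q) (hqΞ : 0 ≤ q + Ξ) (n : ℕ) :
    (Ilen q Ξ n : ℤ) = q * (2 * n + 1) + Ξ :=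
  Int.toNat_of_nonneg (by linarith [mul_nonneg hq n.cast_nonneg])

lemma strictMono_Istart (hq : 1 ≤ q) : StrictMono (Istart q) := fun a b hab ↦
  Nat.pow_lt_pow_right one_lt_two <|
    Nat.mul_lt_mul_of_pos_left (Nat.pow_lt_pow_left hab two_ne_zero) (by lia)

lemma Ilen_pos (hq : 0 ≤ q) (hqΞ : 1 ≤ q + Ξ) (n : ℕ) : 0 < Ilen q Ξ n := by
  have hlen := cast_Ilen hq (by linarith : 0 ≤ q + Ξ) n
  have hqn : 0 ≤ q * n := by positivity
  lia

lemma Istart_add_Ilen_lt (hq : 1 ≤ q) (hqΞ : 0 ≤ q + Ξ) (hJ : 1 ≤ Jlen q Ξ 0) (n : ℕ) :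
    Istart q n + Ilen q Ξ n < Istart q (n + 1) := by
  have hJn : 1 ≤ Jlen q Ξ n := hJ.trans (Jlen_zero_le_Jlen Ξ hq n.cast_nonneg)
  have hlen : (Ilen q Ξ n : ℝ) = q * (2 * n + 1) + Ξ := mod_cast cast_Ilen (by lia) hqΞ n
  have hnext := cast_Istart (show 0 ≤ q by lia) (n + 1)
  rw [Jlen, ← cast_Istart (by lia)] at hJn
  rw [← @Nat.cast_lt ℝ]
  push_cast at hnext ⊢
  linarith [Qf_add_one q n]

lemma cast_add_one_mem_Iset_iff (hq : 0 ≤ q) (hqΞ : 0 ≤ q + Ξ) (j n : ℕ) :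
    (j : ℝ) + 1 ∈ Iset q Ξ n ↔ Istart q n ≤ j + 1 ∧ j + 1 < Istart q n + Ilen q Ξ n := by
  have hlen : (Ilen q Ξ n : ℝ) = Qf q (n + 1) - Qf q n + Ξ := by
    rw [Qf_add_one, add_sub_cancel_left]
    exact_mod_cast cast_Ilen hq hqΞ n
  rw [Iset, Set.mem_Ico, add_sub_assoc, add_assoc, ← hlen, ← cast_Istart hq]
  norm_cast

lemma xseq_eq_zero (hq : 0 ≤ q) (hqΞ : 0 ≤ q + Ξ) {n j : ℕ}
    (hn : Istart q n ≤ j + 1) (hn' : j + 1 < Istart q n + Ilen q Ξ n) : xseq q Ξ j = 0 :=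
  if_pos ⟨n, (cast_add_one_mem_Iset_iff hq hqΞ j n).2 ⟨hn, hn'⟩⟩

lemma xseq_eq_one (hq : 1 ≤ q) (hqΞ : 0 ≤ q + Ξ) (hJ : 1 ≤ Jlen q Ξ 0) {n j : ℕ}
    (hn : Istart q n + Ilen q Ξ n ≤ j + 1) (hn' : j + 1 < Istart q (n + 1)) :
    xseq q Ξ j = 1 := by
  refine if_neg fun ⟨m, hm⟩ ↦ ?_
  obtain ⟨hm, hm'⟩ := (cast_add_one_mem_Iset_iff (by lia) hqΞ j m).1 hm
  have hle : m < n + 1 := (strictMono_Istart hq).lt_iff_lt.1 (hm.trans_lt hn')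
  have hge : n < m + 1 := (strictMono_Istart hq).lt_iff_lt.1 <|
    ((Nat.le_add_right _ _).trans hn).trans_lt (hm'.trans (Istart_add_Ilen_lt hq hqΞ hJ m))
  obtain rfl : m = n := by lia
  lia

end Intervals

section Counting

variable {q Ξ : ℤ} {k m n i : ℕ}

lemma Nf_eq_count (q Ξ : ℤ) (k : ℕ) : Nf q Ξ k = Nat.count (xseq q Ξ · = 0) k :=
  (Nat.count_eq_card_filter_range _ _).symm

lemma Bf_succ_eq_count (q Ξ : ℤ) (k : ℕ) :
    Bf q Ξ (k + 1) = 1 + Nat.count (fun j ↦ xseq q Ξ j ≠ xseq q Ξ (j + 1)) k := by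
  simp [Bf, Nat.count_eq_card_filter_range]

lemma Nf_succ_of_eq_zero (h : xseq q Ξ k = 0) : Nf q Ξ (k + 1) = Nf q Ξ k + 1 := by
  simp [Nf_eq_count, Nat.count_succ, h]

lemma Bf_add_two_of_ne (h : xseq q Ξ k ≠ xseq q Ξ (k + 1)) :
    Bf q Ξ (k + 2) = Bf q Ξ (k + 1) + 1 := by
  simp [Bf_succ_eq_count, Nat.count_succ, h, add_assoc]

lemma Nf_add_of_forall_eq_zero (h : ∀ i < m, xseq q Ξ (k + i) = 0) :
    Nf q Ξ (k + m) = Nf q Ξ k + m := by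
  rw [Nf_eq_count, Nf_eq_count, Nat.count_add, Nat.count_of_forall h]

lemma Nf_add_of_forall_ne_zero (h : ∀ i < m, xseq q Ξ (k + i) ≠ 0) :
    Nf q Ξ (k + m) = Nf q Ξ k := by
  rw [Nf_eq_count, Nf_eq_count, Nat.count_add, Nat.count_of_forall_not h, add_zero]

lemma Bf_add_of_forall_eq (h : ∀ i < m, xseq q Ξ (k + i) = xseq q Ξ (k + i + 1)) :
    Bf q Ξ (k + 1 + m) = Bf q Ξ (k + 1) := by
  rw [add_right_comm, Bf_succ_eq_count, Bf_succ_eq_count, Nat.count_add,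
    Nat.count_of_forall_not fun i hi ↦ not_not.2 (h i hi), add_zero]

lemma Nf_Istart_add (hq : 0 ≤ q) (hqΞ : 0 ≤ q + Ξ) (hi : i < Ilen q Ξ n) :
    Nf q Ξ (Istart q n + i) = Nf q Ξ (Istart q n) + i :=
  Nf_add_of_forall_eq_zero fun _ _ ↦ xseq_eq_zero hq hqΞ (n := n) (by lia) (by lia)

lemma Nf_Istart_add_Ilen_add (hq : 1 ≤ q) (hqΞ : 1 ≤ q + Ξ) (hJ : 1 ≤ Jlen q Ξ 0)
    (hi : Istart q n + Ilen q Ξ n + i < Istart q (n + 1)) :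
    Nf q Ξ (Istart q n + Ilen q Ξ n + i) + 1 = Nf q Ξ (Istart q n) + Ilen q Ξ n := by
  obtain ⟨l, hl⟩ : ∃ l, Ilen q Ξ n = l + 1 :=
    Nat.exists_eq_add_one.2 (Ilen_pos (by lia) hqΞ n)
  have hlast : Nf q Ξ (Istart q n + l) = Nf q Ξ (Istart q n) + l :=
    Nf_Istart_add (by lia) (by lia) (by lia)
  have hconst : Nf q Ξ (Istart q n + l + (1 + i)) = Nf q Ξ (Istart q n + l) :=
    Nf_add_of_forall_ne_zero fun _ _ ↦ by
      rw [xseq_eq_one hq (by lia) hJ (n := n) (by lia) (by lia)]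
      exact one_ne_zero
  rw [hl, show Istart q n + (l + 1) + i = Istart q n + l + (1 + i) by ring, hconst, hlast,
    add_assoc]

lemma Nf_Istart_succ (hq : 1 ≤ q) (hqΞ : 1 ≤ q + Ξ) (hJ : 1 ≤ Jlen q Ξ 0) (n : ℕ) :
    Nf q Ξ (Istart q (n + 1)) = Nf q Ξ (Istart q n) + Ilen q Ξ n := by
  obtain ⟨i, hi⟩ := Nat.exists_eq_add_of_lt (Istart_add_Ilen_lt hq (by lia) hJ n)
  rw [hi, Nf_succ_of_eq_zero, Nf_Istart_add_Ilen_add hq hqΞ hJ (by lia)]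
  have := Ilen_pos (by lia) hqΞ (n + 1)
  exact xseq_eq_zero (by lia) (by lia) hi.le (by lia)

lemma cast_Nf_Istart (hq : 1 ≤ q) (hqΞ : 1 ≤ q + Ξ) (hJ : 1 ≤ Jlen q Ξ 0) (n : ℕ) :
    (Nf q Ξ (Istart q n) : ℤ) = q * n ^ 2 + Ξ * n + 1 := by
  induction n with
  | zero =>
    have hpos := Ilen_pos (by lia) hqΞ 0
    have hx : xseq q Ξ 0 = 0 :=
      xseq_eq_zero (n := 0) (by lia) (by lia) (by simp [Istart]) (by simp [Istart, hpos])
    simp [Istart, Nf_eq_count, Nat.count_one, hx]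
  | succ n ih =>
    rw [Nf_Istart_succ hq hqΞ hJ]
    push_cast
    rw [ih, cast_Ilen (by lia) (by lia)]
    ring

lemma Bf_Istart_add (hq : 0 ≤ q) (hqΞ : 0 ≤ q + Ξ) (hi : i < Ilen q Ξ n) :
    Bf q Ξ (Istart q n + i) = Bf q Ξ (Istart q n) := by
  obtain ⟨e, he⟩ := Nat.exists_eq_add_one.2 (Istart_pos q n)
  rw [he]
  refine Bf_add_of_forall_eq fun _ _ ↦ ?_
  rw [xseq_eq_zero hq hqΞ (n := n) (by lia) (by lia),
    xseq_eq_zero hq hqΞ (n := n) (by lia) (by lia)]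

lemma Bf_Istart_add_Ilen_add (hq : 1 ≤ q) (hqΞ : 1 ≤ q + Ξ) (hJ : 1 ≤ Jlen q Ξ 0)
    (hi : Istart q n + Ilen q Ξ n + i < Istart q (n + 1)) :
    Bf q Ξ (Istart q n + Ilen q Ξ n + i) = Bf q Ξ (Istart q n) + 1 := by
  obtain ⟨l, hl⟩ : ∃ l, Ilen q Ξ n = l + 1 :=
    Nat.exists_eq_add_one.2 (Ilen_pos (by lia) hqΞ n)
  obtain ⟨e, he⟩ := Nat.exists_eq_add_one.2 (Istart_pos q n)
  have hconstI : Bf q Ξ (e + 1 + l) = Bf q Ξ (e + 1) :=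
    he ▸ Bf_Istart_add (by lia) (by lia) (by lia)
  have hchange : Bf q Ξ (e + l + 2) = Bf q Ξ (e + l + 1) + 1 := by
    apply Bf_add_two_of_ne
    rw [xseq_eq_zero (n := n) (by lia) (by lia) (by lia) (by lia),
      xseq_eq_one hq (by lia) hJ (n := n) (by lia) (by lia)]
    exact zero_ne_one
  have hconstJ : Bf q Ξ (e + l + 1 + 1 + i) = Bf q Ξ (e + l + 1 + 1) := by
    refine Bf_add_of_forall_eq fun _ _ ↦ ?_
    rw [xseq_eq_one hq (by lia) hJ (n := n) (by lia) (by lia),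
      xseq_eq_one hq (by lia) hJ (n := n) (by lia) (by lia)]
  rw [he, hl, show e + 1 + (l + 1) + i = e + l + 1 + 1 + i by ring, hconstJ, hchange,
    add_right_comm, hconstI]

lemma Bf_Istart_succ (hq : 1 ≤ q) (hqΞ : 1 ≤ q + Ξ) (hJ : 1 ≤ Jlen q Ξ 0) (n : ℕ) :
    Bf q Ξ (Istart q (n + 1)) = Bf q Ξ (Istart q n) + 2 := by
  obtain ⟨i, hi⟩ := Nat.exists_eq_add_of_lt (Istart_add_Ilen_lt hq (by lia) hJ n)
  obtain ⟨e, he⟩ := Nat.exists_eq_add_one.2 (Istart_pos q n)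
  have hpos := Ilen_pos (by lia) hqΞ (n + 1)
  have hlast := Bf_Istart_add_Ilen_add hq hqΞ hJ (n := n) (i := i) (by lia)
  rw [hi]
  rw [show Istart q n + Ilen q Ξ n + i = e + Ilen q Ξ n + i + 1 by lia] at hlast ⊢
  rw [Bf_add_two_of_ne, hlast]
  rw [xseq_eq_one hq (by lia) hJ (n := n) (by lia) (by lia),
    xseq_eq_zero (n := n + 1) (by lia) (by lia) (by lia) (by lia)]
  exact one_ne_zero

lemma Bf_Istart (hq : 1 ≤ q) (hqΞ : 1 ≤ q + Ξ) (hJ : 1 ≤ Jlen q Ξ 0) (n : ℕ) :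
    Bf q Ξ (Istart q n) = 2 * n + 1 := by
  induction n with
  | zero => simp [Istart, Bf]
  | succ n ih => rw [Bf_Istart_succ hq hqΞ hJ, ih]; ring

end Counting

section BlockSums

/-- The `k`-th term of the series `Π(τ, λ)`. -/
noncomputable def Pi2Term (q Ξ : ℤ) (ξ τ lam : ℝ) (k : ℕ) : ℝ :=
  2 ^ (-lam * k - τ * Nf q Ξ k + τ * ξ * Bf q Ξ k)

/-- The bound for the contribution of `J_n` to `Π(τ, λ)`: each term indexed by `J_n` is at most
`2 ^ (-τ (Q(n + 1) + (Ξ - 2ξ) (n + 1)))`, and there are at most `2 ^ Q(n + 1)` of them. -/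
noncomputable def Jmajorant (q Ξ : ℤ) (ξ τ : ℝ) (n : ℕ) : ℝ :=
  2 ^ ((1 - τ) * Qf q (n + 1) - τ * (Ξ - 2 * ξ) * (n + 1))

variable {q Ξ : ℤ} {ξ τ lam : ℝ} {M n k i : ℕ}

lemma Pi2Term_nonneg (q Ξ : ℤ) (ξ τ lam : ℝ) (k : ℕ) : 0 ≤ Pi2Term q Ξ ξ τ lam k := by
  unfold Pi2Term
  positivity

lemma Jmajorant_nonneg (q Ξ : ℤ) (ξ τ : ℝ) (n : ℕ) : 0 ≤ Jmajorant q Ξ ξ τ n := by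
  unfold Jmajorant
  positivity

lemma Pi2Term_zero (q Ξ : ℤ) (ξ τ lam : ℝ) : Pi2Term q Ξ ξ τ lam 0 = 1 := by
  simp [Pi2Term, Nf, Bf]

lemma Pi2Term_Istart_add (hq : 1 ≤ q) (hqΞ : 1 ≤ q + Ξ) (hJ : 1 ≤ Jlen q Ξ 0)
    (hi : i < Ilen q Ξ n) :
    Pi2Term q Ξ ξ τ lam (Istart q n + i) =
      2 ^ (τ * ξ - lam * (Istart q n + i) - τ * (q * n ^ 2 + (Ξ - 2 * ξ) * n + (i + 1))) := by
  have hN : (Nf q Ξ (Istart q n) : ℝ) = q * n ^ 2 + Ξ * n + 1 :=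
    mod_cast cast_Nf_Istart hq hqΞ hJ n
  rw [Pi2Term, Nf_Istart_add (by lia) (by lia) hi, Bf_Istart_add (by lia) (by lia) hi,
    Bf_Istart hq hqΞ hJ]
  push_cast
  rw [hN]
  ring_nf

lemma Pi2Term_of_mem_J (hq : 1 ≤ q) (hqΞ : 1 ≤ q + Ξ) (hJ : 1 ≤ Jlen q Ξ 0)
    (hk : k ∈ Finset.Ico (Istart q n + Ilen q Ξ n) (Istart q (n + 1))) :
    Pi2Term q Ξ ξ τ lam k =
      Jmajorant q Ξ ξ τ n * 2 ^ (-Qf q (n + 1)) * (2 ^ (-lam)) ^ k := by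
  obtain ⟨hk, hk'⟩ := Finset.mem_Ico.1 hk
  obtain ⟨i, rfl⟩ := Nat.exists_eq_add_of_le hk
  have hNnat := Nf_Istart_add_Ilen_add hq hqΞ hJ hk'
  have hstart := cast_Nf_Istart hq hqΞ hJ n
  have hlen := cast_Ilen (by lia : 0 ≤ q) (by lia : 0 ≤ q + Ξ) n
  have hN : (Nf q Ξ (Istart q n + Ilen q Ξ n + i) : ℤ) = q * (n + 1) ^ 2 + Ξ * (n + 1) := by
    zify at hNnat
    linear_combination hNnat + hstart + hlen
  have hN' : (Nf q Ξ (Istart q n + Ilen q Ξ n + i) : ℝ) = q * (n + 1) ^ 2 + Ξ * (n + 1) :=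
    mod_cast hN
  rw [Pi2Term, hN', Bf_Istart_add_Ilen_add hq hqΞ hJ hk', Bf_Istart hq hqΞ hJ, Jmajorant,
    ← Real.rpow_mul_natCast zero_le_two, ← Real.rpow_add two_pos, ← Real.rpow_add two_pos]
  simp only [Qf]
  push_cast
  ring_nf

lemma Pi2Term_Istart_add_le (hq : 1 ≤ q) (hqΞ : 1 ≤ q + Ξ) (hJ : 1 ≤ Jlen q Ξ 0)
    (hξ : 2 * ξ ≤ Ξ) (hτ : 0 ≤ τ) (hlam : 0 ≤ lam) (hi : i < Ilen q Ξ n) :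
    Pi2Term q Ξ ξ τ lam (Istart q n + i) ≤ 2 ^ (τ * ξ) * (2 ^ (-τ)) ^ (n + (i + 1)) := by
  have hexp : (n : ℝ) ≤ q * n ^ 2 + (Ξ - 2 * ξ) * n := by
    have hsq : (1 : ℝ) * n ≤ q * n ^ 2 := mod_cast
      mul_le_mul hq (by exact_mod_cast Nat.le_self_pow two_ne_zero n) n.cast_nonneg (by lia)
    linarith [mul_nonneg (sub_nonneg.2 hξ) n.cast_nonneg]
  have hdecay : 0 ≤ lam * (Istart q n + i) := by positivity
  rw [Pi2Term_Istart_add hq hqΞ hJ hi, ← Real.rpow_mul_natCast zero_le_two,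
    ← Real.rpow_add two_pos, Real.rpow_le_rpow_left_iff one_lt_two]
  push_cast
  linarith [mul_le_mul_of_nonneg_left hexp hτ]

lemma sum_Pi2Term_I_le (hq : 1 ≤ q) (hqΞ : 1 ≤ q + Ξ) (hJ : 1 ≤ Jlen q Ξ 0)
    (hξ : 2 * ξ ≤ Ξ) (hτ : 0 < τ) (hlam : 0 ≤ lam) (n : ℕ) :
    ∑ k ∈ Finset.Ico (Istart q n) (Istart q n + Ilen q Ξ n), Pi2Term q Ξ ξ τ lam k ≤
      2 ^ (τ * ξ) * (2 ^ (-τ) / (1 - 2 ^ (-τ))) * (2 ^ (-τ)) ^ n := by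
  have hr : (2 : ℝ) ^ (-τ) < 1 := Real.rpow_lt_one_of_one_lt_of_neg one_lt_two (by linarith)
  have hgeom : ∑ i ∈ Finset.range (Ilen q Ξ n), ((2 : ℝ) ^ (-τ)) ^ (i + 1) ≤
      2 ^ (-τ) / (1 - 2 ^ (-τ)) := by
    simpa [Finset.sum_Ico_eq_sum_range, add_comm] using
      geom_sum_Ico_le_of_lt_one (m := 1) (n := Ilen q Ξ n + 1) (by positivity) hr
  rw [Finset.sum_Ico_eq_sum_range, Nat.add_sub_cancel_left]
  calc ∑ i ∈ Finset.range (Ilen q Ξ n), Pi2Term q Ξ ξ τ lam (Istart q n + i)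
      ≤ ∑ i ∈ Finset.range (Ilen q Ξ n), 2 ^ (τ * ξ) * ((2 : ℝ) ^ (-τ)) ^ (n + (i + 1)) :=
        Finset.sum_le_sum fun i hi ↦
          Pi2Term_Istart_add_le hq hqΞ hJ hξ hτ.le hlam (Finset.mem_range.1 hi)
    _ = 2 ^ (τ * ξ) * (2 ^ (-τ)) ^ n * ∑ i ∈ Finset.range (Ilen q Ξ n), (2 ^ (-τ)) ^ (i + 1) := by
        simp only [pow_add _ n, Finset.mul_sum, mul_assoc]
    _ ≤ 2 ^ (τ * ξ) * (2 ^ (-τ)) ^ n * (2 ^ (-τ) / (1 - 2 ^ (-τ))) := by gcongr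
    _ = 2 ^ (τ * ξ) * (2 ^ (-τ) / (1 - 2 ^ (-τ))) * (2 ^ (-τ)) ^ n := mul_right_comm _ _ _

lemma sum_Pi2Term_J_le (hq : 1 ≤ q) (hqΞ : 1 ≤ q + Ξ) (hJ : 1 ≤ Jlen q Ξ 0)
    (hlam : 0 ≤ lam) (n : ℕ) :
    ∑ k ∈ Finset.Ico (Istart q n + Ilen q Ξ n) (Istart q (n + 1)), Pi2Term q Ξ ξ τ lam k ≤
      Jmajorant q Ξ ξ τ n := by
  have hterm : ∀ k ∈ Finset.Ico (Istart q n + Ilen q Ξ n) (Istart q (n + 1)),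
      Pi2Term q Ξ ξ τ lam k ≤ Jmajorant q Ξ ξ τ n * 2 ^ (-Qf q (n + 1)) := fun k hk ↦ by
    have hr : (2 : ℝ) ^ (-lam) ≤ 1 := Real.rpow_le_one_of_one_le_of_nonpos one_le_two (by linarith)
    rw [Pi2Term_of_mem_J hq hqΞ hJ hk]
    exact mul_le_of_le_one_right (mul_nonneg (Jmajorant_nonneg ..) (by positivity))
      (pow_le_one₀ (by positivity) hr)
  have hcard : (Istart q (n + 1) : ℝ) = 2 ^ Qf q (n + 1) := mod_cast cast_Istart (by lia) (n + 1)
  calc _ ≤ (Istart q (n + 1) - (Istart q n + Ilen q Ξ n) : ℕ) •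
          (Jmajorant q Ξ ξ τ n * 2 ^ (-Qf q (n + 1))) := by
        simpa using Finset.sum_le_card_nsmul _ _ _ hterm
    _ ≤ 2 ^ Qf q (n + 1) * (Jmajorant q Ξ ξ τ n * 2 ^ (-Qf q (n + 1))) := by
        rw [nsmul_eq_mul, ← hcard]
        gcongr
        · exact mul_nonneg (Jmajorant_nonneg ..) (by positivity)
        · exact Nat.sub_le _ _
    _ = Jmajorant q Ξ ξ τ n := by
        rw [mul_left_comm, ← Real.rpow_add two_pos, add_neg_cancel, Real.rpow_zero, mul_one]

lemma inv_one_sub_two_rpow_neg_le {x : ℝ} (hx : 0 < x) (hx' : x ≤ 1) :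
    (1 - (2 : ℝ) ^ (-x))⁻¹ ≤ 2 * x⁻¹ := by
  have hbernoulli : (2 : ℝ) ^ (-x) ≤ 1 + x * (-1 / 2) := by
    convert rpow_one_add_le_one_add_mul_self (s := -1 / 2) (by norm_num) hx.le hx' using 1
    rw [Real.rpow_neg zero_le_two, ← Real.inv_rpow zero_le_two]
    norm_num
  calc (1 - (2 : ℝ) ^ (-x))⁻¹ ≤ (x / 2)⁻¹ := inv_anti₀ (by positivity) (by linarith)
    _ = 2 * x⁻¹ := by rw [inv_div, div_eq_mul_inv]

lemma sum_Pi2Term_J_le_of_inv_le (hq : 1 ≤ q) (hqΞ : 1 ≤ q + Ξ) (hJ : 1 ≤ Jlen q Ξ 0)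
    (hlam : 0 < lam) (hlam' : lam ≤ 1) (hM : lam⁻¹ ≤ 2 ^ Qf q (M + 1)) (n : ℕ) :
    ∑ k ∈ Finset.Ico (Istart q n + Ilen q Ξ n) (Istart q (n + 1)), Pi2Term q Ξ ξ τ lam k ≤
      2 * (Jmajorant q Ξ ξ τ n * 2 ^ (Qf q (M + 1) - Qf q (n + 1))) := by
  have hr : (2 : ℝ) ^ (-lam) < 1 := Real.rpow_lt_one_of_one_lt_of_neg one_lt_two (by linarith)
  have hgeom : ∑ k ∈ Finset.Ico (Istart q n + Ilen q Ξ n) (Istart q (n + 1)),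
      ((2 : ℝ) ^ (-lam)) ^ k ≤ 2 * 2 ^ Qf q (M + 1) :=
    calc _ ≤ ((2 : ℝ) ^ (-lam)) ^ (Istart q n + Ilen q Ξ n) / (1 - 2 ^ (-lam)) :=
          geom_sum_Ico_le_of_lt_one (by positivity) hr
      _ ≤ (1 - (2 : ℝ) ^ (-lam))⁻¹ := by
          rw [← one_div]
          gcongr
          exact pow_le_one₀ (by positivity) hr.le
      _ ≤ 2 * lam⁻¹ := inv_one_sub_two_rpow_neg_le hlam hlam'
      _ ≤ 2 * 2 ^ Qf q (M + 1) := by gcongr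
  have hfactor : 0 ≤ Jmajorant q Ξ ξ τ n * 2 ^ (-Qf q (n + 1)) :=
    mul_nonneg (Jmajorant_nonneg ..) (by positivity)
  rw [Finset.sum_congr rfl fun k hk ↦ Pi2Term_of_mem_J hq hqΞ hJ hk, ← Finset.mul_sum,
    sub_eq_neg_add, Real.rpow_add two_pos]
  linarith [mul_le_mul_of_nonneg_left hgeom hfactor]

lemma Jmajorant_mul_two_rpow_le (hq : 1 ≤ q) (hξ : 2 * ξ ≤ Ξ) (hτ : 0 ≤ τ) (M i : ℕ) :
    Jmajorant q Ξ ξ τ (i + (M + 1)) * 2 ^ (Qf q (M + 1) - Qf q ((i + (M + 1) : ℕ) + 1)) ≤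
      Jmajorant q Ξ ξ τ M * (4 ^ (-τ)) ^ (i + 1) := by
  have hq' : (1 : ℝ) ≤ q := mod_cast hq
  have hQ : Qf q (M + 1) + 2 * (i + 1) ≤ Qf q ((i + (M + 1) : ℕ) + 1) := by
    have hfactor : Qf q ((i + (M + 1) : ℕ) + 1) - Qf q (M + 1) =
        q * (i + 2 * M + 3) * (i + 1) := by
      unfold Qf
      push_cast
      ring
    have hcoef : (2 : ℝ) ≤ q * (i + 2 * M + 3) := by
      nlinarith [(i.cast_nonneg : (0 : ℝ) ≤ i), (M.cast_nonneg : (0 : ℝ) ≤ M)]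
    linarith [mul_le_mul_of_nonneg_right hcoef (by positivity : (0 : ℝ) ≤ i + 1)]
  have hc : 0 ≤ τ * (Ξ - 2 * ξ) * (i + 1) :=
    mul_nonneg (mul_nonneg hτ (sub_nonneg.2 hξ)) (by positivity)
  have hfour : (4 : ℝ) ^ (-τ) = 2 ^ (2 * -τ) := by
    rw [Real.rpow_mul zero_le_two]
    norm_num
  rw [Jmajorant, Jmajorant, hfour, ← Real.rpow_mul_natCast zero_le_two, ← Real.rpow_add two_pos,
    ← Real.rpow_add two_pos, Real.rpow_le_rpow_left_iff one_lt_two]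
  have := mul_le_mul_of_nonneg_left hQ hτ
  push_cast at this ⊢
  linarith

end BlockSums

section Series

lemma tsum_eq_sum_range_add_tsum_sum_Ico {u : ℕ → ℕ} (hu : StrictMono u) (f : ℕ → ℝ≥0∞) :
    ∑' k, f k = ∑ k ∈ Finset.range (u 0), f k +
      ∑' n, ∑ k ∈ Finset.Ico (u n) (u (n + 1)), f k := by
  have hpartial (N : ℕ) : ∑ k ∈ Finset.range (u N), f k = ∑ k ∈ Finset.range (u 0), f k +
      ∑ n ∈ Finset.range N, ∑ k ∈ Finset.Ico (u n) (u (n + 1)), f k := by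
    induction N with
    | zero => simp
    | succ N ih =>
      rw [← Finset.sum_range_add_sum_Ico f (hu.monotone N.le_succ), ih,
        Finset.sum_range_succ _ N, add_assoc]
  refine tendsto_nhds_unique ((ENNReal.tendsto_nat_tsum f).comp hu.tendsto_atTop) ?_
  exact ((ENNReal.tendsto_nat_tsum _).const_add _).congr fun N ↦ (hpartial N).symm

lemma tsum_ofReal_mul_pow {c r : ℝ} (hc : 0 ≤ c) (hr : 0 ≤ r) (hr' : r < 1) :
    ∑' n : ℕ, ENNReal.ofReal (c * r ^ n) = ENNReal.ofReal (c * (1 - r)⁻¹) := by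
  rw [← tsum_geometric_of_lt_one hr hr', ← tsum_mul_left]
  exact (ENNReal.ofReal_tsum_of_nonneg (fun n ↦ by positivity)
    ((summable_geometric_of_lt_one hr hr').mul_left c)).symm

variable {q Ξ : ℤ} {ξ τ lam : ℝ} {M : ℕ}

lemma tsum_sum_Pi2Term_I_le (hq : 1 ≤ q) (hqΞ : 1 ≤ q + Ξ) (hJ : 1 ≤ Jlen q Ξ 0)
    (hξ : 2 * ξ ≤ Ξ) (hτ : 0 < τ) (hlam : 0 ≤ lam) :
    ∑' n, ∑ k ∈ Finset.Ico (Istart q n) (Istart q n + Ilen q Ξ n),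
        ENNReal.ofReal (Pi2Term q Ξ ξ τ lam k) ≤
      ENNReal.ofReal (2 ^ (-τ) / (1 - 2 ^ (-τ)) ^ 2 * 2 ^ (τ * ξ)) := by
  have hr : (2 : ℝ) ^ (-τ) < 1 := Real.rpow_lt_one_of_one_lt_of_neg one_lt_two (by linarith)
  have hr' : 0 < 1 - (2 : ℝ) ^ (-τ) := by linarith
  simp only [← ENNReal.ofReal_sum_of_nonneg fun k _ ↦ Pi2Term_nonneg q Ξ ξ τ lam k]
  calc _ ≤ ∑' n, ENNReal.ofReal (2 ^ (τ * ξ) * (2 ^ (-τ) / (1 - 2 ^ (-τ))) * (2 ^ (-τ)) ^ n) :=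
        ENNReal.tsum_le_tsum fun n ↦
          ENNReal.ofReal_le_ofReal (sum_Pi2Term_I_le hq hqΞ hJ hξ hτ hlam n)
    _ = ENNReal.ofReal (2 ^ (τ * ξ) * (2 ^ (-τ) / (1 - 2 ^ (-τ))) * (1 - 2 ^ (-τ))⁻¹) :=
        tsum_ofReal_mul_pow (by positivity) (by positivity) hr
    _ = _ := by
        congr 1
        field_simp

lemma tsum_sum_Pi2Term_J_tail_le (hq : 1 ≤ q) (hqΞ : 1 ≤ q + Ξ) (hJ : 1 ≤ Jlen q Ξ 0)
    (hξ : 2 * ξ ≤ Ξ) (hτ : 0 < τ) (hlam : 0 < lam) (hlam' : lam ≤ 1)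
    (hM : lam⁻¹ ≤ 2 ^ Qf q (M + 1)) :
    ∑' i, ENNReal.ofReal (∑ k ∈ Finset.Ico (Istart q (i + (M + 1)) + Ilen q Ξ (i + (M + 1)))
        (Istart q (i + (M + 1) + 1)), Pi2Term q Ξ ξ τ lam k) ≤
      ENNReal.ofReal (2 * 4 ^ (-τ) / (1 - 4 ^ (-τ)) * Jmajorant q Ξ ξ τ M) := by
  have hr : (4 : ℝ) ^ (-τ) < 1 := Real.rpow_lt_one_of_one_lt_of_neg (by norm_num) (by linarith)
  have hmaj := Jmajorant_nonneg q Ξ ξ τ M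
  have hterm (i : ℕ) : ∑ k ∈ Finset.Ico (Istart q (i + (M + 1)) + Ilen q Ξ (i + (M + 1)))
        (Istart q (i + (M + 1) + 1)), Pi2Term q Ξ ξ τ lam k ≤
      2 * Jmajorant q Ξ ξ τ M * 4 ^ (-τ) * (4 ^ (-τ)) ^ i := by
    have hblock := sum_Pi2Term_J_le_of_inv_le (ξ := ξ) (τ := τ) hq hqΞ hJ hlam hlam' hM
      (i + (M + 1))
    have hdecay := Jmajorant_mul_two_rpow_le hq hξ hτ.le M i
    rw [pow_succ'] at hdecay
    linarith
  calc _ ≤ ∑' i, ENNReal.ofReal (2 * Jmajorant q Ξ ξ τ M * 4 ^ (-τ) * (4 ^ (-τ)) ^ i) :=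
        ENNReal.tsum_le_tsum fun i ↦ ENNReal.ofReal_le_ofReal (hterm i)
    _ = ENNReal.ofReal (2 * Jmajorant q Ξ ξ τ M * 4 ^ (-τ) * (1 - 4 ^ (-τ))⁻¹) :=
        tsum_ofReal_mul_pow (by positivity) (by positivity) hr
    _ = _ := by
        congr 1
        ring

lemma tsum_sum_Pi2Term_J_le (hq : 1 ≤ q) (hqΞ : 1 ≤ q + Ξ) (hJ : 1 ≤ Jlen q Ξ 0)
    (hξ : 2 * ξ ≤ Ξ) (hτ : 0 < τ) (hlam : 0 < lam) (hlam' : lam ≤ 1)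
    (hM : lam⁻¹ ≤ 2 ^ Qf q (M + 1)) :
    ∑' n, ∑ k ∈ Finset.Ico (Istart q n + Ilen q Ξ n) (Istart q (n + 1)),
        ENNReal.ofReal (Pi2Term q Ξ ξ τ lam k) ≤
      ENNReal.ofReal ((1 + 4 ^ (-τ)) / (1 - 4 ^ (-τ)) *
        ∑ j ∈ Finset.range (M + 1), Jmajorant q Ξ ξ τ j) := by
  have hr : 0 < 1 - (4 : ℝ) ^ (-τ) :=
    sub_pos.2 (Real.rpow_lt_one_of_one_lt_of_neg (by norm_num) (by linarith))
  have hmaj := Jmajorant_nonneg q Ξ ξ τ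
  have hlast : Jmajorant q Ξ ξ τ M ≤ ∑ j ∈ Finset.range (M + 1), Jmajorant q Ξ ξ τ j :=
    Finset.single_le_sum (fun j _ ↦ hmaj j) (Finset.self_mem_range_succ M)
  have hhead : ∑ n ∈ Finset.range (M + 1), ENNReal.ofReal
        (∑ k ∈ Finset.Ico (Istart q n + Ilen q Ξ n) (Istart q (n + 1)), Pi2Term q Ξ ξ τ lam k) ≤
      ENNReal.ofReal (∑ j ∈ Finset.range (M + 1), Jmajorant q Ξ ξ τ j) := by
    rw [ENNReal.ofReal_sum_of_nonneg fun j _ ↦ hmaj j]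
    exact Finset.sum_le_sum fun n _ ↦
      ENNReal.ofReal_le_ofReal (sum_Pi2Term_J_le hq hqΞ hJ hlam.le n)
  simp only [← ENNReal.ofReal_sum_of_nonneg fun k _ ↦ Pi2Term_nonneg q Ξ ξ τ lam k]
  rw [← Summable.sum_add_tsum_nat_add' (k := M + 1) ENNReal.summable]
  calc _ ≤ ENNReal.ofReal (∑ j ∈ Finset.range (M + 1), Jmajorant q Ξ ξ τ j) +
          ENNReal.ofReal (2 * 4 ^ (-τ) / (1 - 4 ^ (-τ)) * Jmajorant q Ξ ξ τ M) :=
        add_le_add hhead (tsum_sum_Pi2Term_J_tail_le hq hqΞ hJ hξ hτ hlam hlam' hM)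
    _ = ENNReal.ofReal (∑ j ∈ Finset.range (M + 1), Jmajorant q Ξ ξ τ j +
          2 * 4 ^ (-τ) / (1 - 4 ^ (-τ)) * Jmajorant q Ξ ξ τ M) :=
        (ENNReal.ofReal_add (Finset.sum_nonneg fun j _ ↦ hmaj j)
          (mul_nonneg (by positivity) (hmaj M))).symm
    _ ≤ ENNReal.ofReal (∑ j ∈ Finset.range (M + 1), Jmajorant q Ξ ξ τ j +
          2 * 4 ^ (-τ) / (1 - 4 ^ (-τ)) * ∑ j ∈ Finset.range (M + 1), Jmajorant q Ξ ξ τ j) := by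
        gcongr
    _ = _ := by
        congr 1
        field_simp
        ring

theorem Pi2_le_of_inv_le (hq : 1 ≤ q) (hqΞ : 1 ≤ q + Ξ) (hJ : 1 ≤ Jlen q Ξ 0)
    (hξ : 2 * ξ ≤ Ξ) (hτ : 0 < τ) (hlam : 0 < lam) (hlam' : lam ≤ 1)
    (hM : lam⁻¹ ≤ 2 ^ Qf q (M + 1)) :
    Pi2 q Ξ ξ τ lam ≤ ENNReal.ofReal (1 + 2 ^ (-τ) / (1 - 2 ^ (-τ)) ^ 2 * 2 ^ (τ * ξ) +
      (1 + 4 ^ (-τ)) / (1 - 4 ^ (-τ)) * ∑ j ∈ Finset.range (M + 1), Jmajorant q Ξ ξ τ j) := by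
  have hr : 0 < 1 - (4 : ℝ) ^ (-τ) :=
    sub_pos.2 (Real.rpow_lt_one_of_one_lt_of_neg (by norm_num) (by linarith))
  have hsplit : Pi2 q Ξ ξ τ lam = 1 +
      (∑' n, ∑ k ∈ Finset.Ico (Istart q n) (Istart q n + Ilen q Ξ n),
          ENNReal.ofReal (Pi2Term q Ξ ξ τ lam k) +
        ∑' n, ∑ k ∈ Finset.Ico (Istart q n + Ilen q Ξ n) (Istart q (n + 1)),
          ENNReal.ofReal (Pi2Term q Ξ ξ τ lam k)) := by
    change ∑' k, ENNReal.ofReal (Pi2Term q Ξ ξ τ lam k) = _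
    rw [tsum_eq_sum_range_add_tsum_sum_Ico (strictMono_Istart hq), ← ENNReal.tsum_add]
    simp only [Finset.sum_Ico_consecutive _ (Nat.le_add_right _ _)
      (Istart_add_Ilen_lt hq (by lia) hJ _).le]
    simp [Istart, Pi2Term_zero]
  rw [hsplit, add_assoc, ENNReal.ofReal_add zero_le_one, ENNReal.ofReal_add, ENNReal.ofReal_one]
  · gcongr
    · exact tsum_sum_Pi2Term_I_le hq hqΞ hJ hξ hτ hlam.le
    · exact tsum_sum_Pi2Term_J_le hq hqΞ hJ hξ hτ hlam hlam' hM
  all_goals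
    have := Finset.sum_nonneg fun j (_ : j ∈ Finset.range (M + 1)) ↦ Jmajorant_nonneg q Ξ ξ τ j
    positivity

end Series

lemma two_rpow_neg_div_sq_le {τ : ℝ} (hτ : 1 / 2 ≤ τ) :
    (2 : ℝ) ^ (-τ) / (1 - 2 ^ (-τ)) ^ 2 ≤ 10 := by
  have hr : (2 : ℝ) ^ (-τ) ≤ 5 / 7 :=
    calc (2 : ℝ) ^ (-τ) ≤ 2 ^ (-(1 / 2) : ℝ) :=
          Real.rpow_le_rpow_of_exponent_le one_le_two (by linarith)
      _ = (√2)⁻¹ := by rw [Real.rpow_neg zero_le_two, Real.sqrt_eq_rpow]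
      _ ≤ (7 / 5)⁻¹ := inv_anti₀ (by norm_num) (Real.le_sqrt_of_sq_le (by norm_num))
      _ = 5 / 7 := by norm_num
  rw [div_le_iff₀ (pow_pos (by linarith) 2)]
  nlinarith

lemma one_add_four_rpow_neg_div_le {τ : ℝ} (hτ : 1 / 2 ≤ τ) :
    (1 + (4 : ℝ) ^ (-τ)) / (1 - 4 ^ (-τ)) ≤ 5 := by
  have hr : (4 : ℝ) ^ (-τ) ≤ 1 / 2 :=
    calc (4 : ℝ) ^ (-τ) ≤ 4 ^ (-(1 / 2) : ℝ) :=
          Real.rpow_le_rpow_of_exponent_le (by norm_num) (by linarith)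
      _ = 1 / 2 := by
          rw [show (4 : ℝ) = 2 ^ (2 : ℝ) by norm_num, ← Real.rpow_mul zero_le_two]
          norm_num [Real.rpow_neg_one]
  rw [div_le_iff₀ (by linarith)]
  linarith

theorem stmt5_general {Ξ q : ℤ} (hq : 1 ≤ q) (hqΞ : 1 ≤ q + Ξ) (hJ : 1 ≤ Jlen q Ξ 0)
    {ξ : ℝ} (hξ : 2 * ξ ≤ Ξ) {s : ℝ} (hs : 0 ≤ s) {τ : ℝ} (hτ : 0 < τ) :
    Pi2 q Ξ ξ τ (lamf q Ξ s) ≤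
      ENNReal.ofReal (1 + 2 ^ (-τ) / (1 - 2 ^ (-τ)) ^ 2 * 2 ^ (τ * ξ)
        + (1 + 4 ^ (-τ)) / (1 - 4 ^ (-τ)) * ∑ j ∈ Finset.range (Nat.floor s + 2),
            (2 : ℝ) ^ ((1 - τ) * Qf q ((j : ℝ) + 1)
              - τ * ((Ξ : ℝ) - 2 * ξ) * ((j : ℝ) + 1))) := by
  have hJs : 1 ≤ Jlen q Ξ s := hJ.trans (Jlen_zero_le_Jlen Ξ hq hs)
  have hlam : lamf q Ξ s = (Jlen q Ξ s)⁻¹ := one_div _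
  refine Pi2_le_of_inv_le hq hqΞ hJ hξ hτ ?_ ?_ ?_
  · rw [hlam]
    positivity
  · rw [hlam]
    exact inv_le_one_of_one_le₀ hJs
  · rw [hlam, inv_inv]
    refine (Jlen_le_two_rpow (by lia) (by lia) hs).trans ?_
    gcongr
    · exact one_le_two
    · refine Qf_le_Qf (by lia) (by linarith) ?_
      push_cast
      linarith [Nat.lt_floor_add_one s]

theorem stmt5 (Ξ q : ℤ) (hq : 3 ≤ q) (hqΞ : 1 ≤ q + Ξ)
    (hpow : (q : ℝ) + 1 + (Ξ : ℝ) ≤ (2 : ℝ) ^ ((q : ℝ) - 1))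
    (ξ : ℝ) (hξ1 : 1 ≤ (Ξ : ℝ) - 2 * ξ) (hξ2 : (Ξ : ℝ) - 2 * ξ ≤ 2) :
    ∀ s : ℝ, 0 ≤ s → ∀ τ : ℝ, 1 / 2 < τ → τ < 1 →
      (Qf q (s + 1) - 1) / Qf q (s + 2) < τ →
      Pi2 q Ξ ξ τ (lamf q Ξ s) ≤
        ENNReal.ofReal (1 + 10 * (2 : ℝ) ^ (τ * ξ)
          + 5 * ∑ j ∈ Finset.range (Nat.floor s + 2),
              (2 : ℝ) ^ ((1 - τ) * Qf q ((j : ℝ) + 1)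
                - τ * ((Ξ : ℝ) - 2 * ξ) * ((j : ℝ) + 1))) := by
  intro s hs τ hτ _ _
  refine (stmt5_general (by lia) hqΞ (one_le_Jlen_zero (by lia) hpow) (by linarith) hs
    (by linarith)).trans (ENNReal.ofReal_le_ofReal ?_)
  gcongr
  exacts [two_rpow_neg_div_sq_le hτ.le, one_add_four_rpow_neg_div_le hτ.le]
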